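/- For every integer n ≥ 1 and every x ≥ 0, the first central moment satisfies B̃_n(t−x;x) = (ξ'(p_n(x))/ξ(p_n(x)) − 1)·x + (1/n)·[ S'(1)/S(1) + V'(1)·ξ'(p_n(x))/ξ(p_n(x)) ], where B̃_n(t−x;x) denotes the operator applied to the function t ↦ t−x. -/

import Mathlib

open Real MeasureTheory Filter Topology

/-- `p_n(x) = n² x² T(1) + n x U(1) + V(1)`. -/
noncomputable def pnx (T U V : ℝ → ℝ) (n : ℕ) (x : ℝ) : ℝ :=
  (n : ℝ) ^ 2 * x ^ 2 * T 1 + (n : ℝ) * x * U 1 + V 1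

/-- The Euler Beta function value `B(j, n+1) = Γ(j)Γ(n+1)/Γ(j+n+1)`. -/
noncomputable def betaB (j n : ℕ) : ℝ :=
  Real.Gamma (j : ℝ) * Real.Gamma ((n : ℝ) + 1) / Real.Gamma ((j : ℝ) + (n : ℝ) + 1)

/-- The Baskakov–Durrmeyer type operator `B̃_n(f;x)`. -/
noncomputable def BDop (ξ S T U V : ℝ → ℝ) (Θ : ℕ → ℝ → ℝ) (n : ℕ) (f : ℝ → ℝ) (x : ℝ) : ℝ :=
  (S 1 * ξ (pnx T U V n x))⁻¹ *
    (Θ 0 ((n : ℝ) * x) * f 0 +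
      ∑' j : ℕ, (Θ (j + 1) ((n : ℝ) * x) / betaB (j + 1) n) *
        ∫ s in Set.Ioi (0 : ℝ), s ^ j * (1 + s) ^ (-((n : ℝ) + (j : ℝ) + 2)) * f s)

/-!
Up to its normalisation, the `j`-th integral in the operator is a mean against the beta prime
density with parameters `j` and `n + 1`, so it sends `t ↦ t - c` to `j / n - c`; the point mass
at `0` fits the same pattern for `j = 0`. Hence the operator sends `t ↦ t - c` to
`∑ Θ_j(n x) (j / n - c)` divided by `G(1)`, where `G(s) = ∑ Θ_j(n x) s^j`. Since `1` lies inside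
the disc of convergence, this sum is `G'(1) / n - c G(1)`, and the product and chain rules applied
to `G(s) = S(s) ξ(n² x² T(s) + n x U(s) + V(s))` give the value.
-/

section PowerSeries

open FormalMultilinearSeries

variable {𝕜 : Type*} [RCLike 𝕜] {a : ℕ → 𝕜} {F : 𝕜 → 𝕜} {r : ℝ} {z : 𝕜}

theorem hasFPowerSeriesOnBall_ofScalars_of_hasSum (hr : 0 < r)
    (h : ∀ w ∈ Metric.ball (0 : 𝕜) r, HasSum (fun j ↦ a j * w ^ j) (F w)) :
    HasFPowerSeriesOnBall F (ofScalars 𝕜 a) 0 (ENNReal.ofReal r) where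
  r_le := by
    refine ENNReal.le_of_forall_nnreal_lt fun t ht ↦ ?_
    have ht_mem : ((t : ℝ) : 𝕜) ∈ Metric.ball (0 : 𝕜) r := by
      simpa [ENNReal.lt_ofReal_iff_toReal_lt] using ht
    refine le_radius_of_tendsto _ (l := 0) ?_
    simpa using (h _ ht_mem).summable.tendsto_atTop_zero.norm
  r_pos := ENNReal.ofReal_pos.2 hr
  hasSum {w} hw := by
    rw [Metric.eball_ofReal] at hw
    simpa only [ofScalars_apply_eq, smul_eq_mul, zero_add] using h w hw

theorem hasSum_natCast_mul_pow_deriv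
    (h : ∀ w ∈ Metric.ball (0 : 𝕜) r, HasSum (fun j ↦ a j * w ^ j) (F w))
    (hz : z ∈ Metric.ball (0 : 𝕜) r) :
    HasSum (fun j : ℕ ↦ j * (a j * z ^ j)) (z * deriv F z) := by
  have hF := hasFPowerSeriesOnBall_ofScalars_of_hasSum (Metric.pos_of_mem_ball hz) h
  rw [← Metric.eball_ofReal] at hz
  have hderiv := (ContinuousLinearMap.apply 𝕜 𝕜 z).hasSum (hF.fderiv.hasSum hz)
  simp only [ContinuousLinearMap.apply_apply, derivSeries_apply_diag,
    ofScalars_apply_eq, zero_add, fderiv_eq_smul_deriv, nsmul_eq_mul, smul_eq_mul] at hderiv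
  refine (hasSum_nat_add_iff' 1).1 ?_
  simpa using hderiv

theorem differentiableAt_of_hasSum_pow_add (k : ℕ)
    (h : ∀ w ∈ Metric.ball (0 : 𝕜) r, HasSum (fun j ↦ a j * w ^ (j + k)) (F w))
    (hz : z ∈ Metric.ball (0 : 𝕜) r) :
    DifferentiableAt 𝕜 F z := by
  have hF : HasFPowerSeriesOnBall F (ofScalars 𝕜 (Function.extend (· + k) a 0)) 0 _ :=
    hasFPowerSeriesOnBall_ofScalars_of_hasSum (Metric.pos_of_mem_ball hz) fun w hw ↦ by
      rw [← (add_left_injective k).hasSum_iff]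
      · simpa [Function.comp_def, (add_left_injective k).extend_apply] using h w hw
      · intro i hi
        simp [Function.extend_apply' _ _ _ hi]
  rw [← Metric.eball_ofReal] at hz
  exact (hF.analyticAt_of_mem hz).differentiableAt

end PowerSeries

section BetaPrime

open ProbabilityTheory (beta beta_eq_betaIntegralReal)

theorem image_div_one_add_Ioi_zero :
    (fun s : ℝ ↦ s / (1 + s)) '' Set.Ioi 0 = Set.Ioo 0 1 := by
  ext t
  constructor
  · rintro ⟨s, hs : 0 < s, rfl⟩
    exact ⟨by positivity, by rw [div_lt_one (by positivity)]; linarith⟩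
  · rintro ⟨ht0, ht1⟩
    have ht : 0 < 1 - t := sub_pos.2 ht1
    exact ⟨t / (1 - t), div_pos ht0 ht, by field_simp; ring⟩

theorem hasDerivAt_div_one_add {s : ℝ} (hs : 1 + s ≠ 0) :
    HasDerivAt (fun s : ℝ ↦ s / (1 + s)) (1 / (1 + s) ^ 2) s :=
  ((hasDerivAt_id s).div ((hasDerivAt_id s).const_add 1) hs).congr_deriv (by simp)

theorem monotoneOn_div_one_add :
    MonotoneOn (fun s : ℝ ↦ s / (1 + s)) (Set.Ioi (-1)) := by
  intro s (hs : -1 < s) t (ht : -1 < t) hst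
  change s / (1 + s) ≤ t / (1 + t)
  rw [div_le_div_iff₀ (by linarith) (by linarith)]
  linarith

variable {a b : ℝ}

theorem ofReal_rpow_mul_one_sub_rpow {t : ℝ} (ht : t ∈ Set.Ioo (0 : ℝ) 1) :
    (t : ℂ) ^ ((a : ℂ) - 1) * (1 - (t : ℂ)) ^ ((b : ℂ) - 1) =
      ((t ^ (a - 1) * (1 - t) ^ (b - 1) : ℝ) : ℂ) := by
  push_cast [Complex.ofReal_cpow ht.1.le, Complex.ofReal_cpow (sub_nonneg.2 ht.2.le)]
  rfl

theorem integrableOn_rpow_mul_one_sub_rpow (ha : 0 < a) (hb : 0 < b) :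
    IntegrableOn (fun t : ℝ ↦ t ^ (a - 1) * (1 - t) ^ (b - 1)) (Set.Ioo 0 1) := by
  have hconv : IntegrableOn (fun t : ℝ ↦ (t : ℂ) ^ ((a : ℂ) - 1) * (1 - (t : ℂ)) ^ ((b : ℂ) - 1))
      (Set.Ioo 0 1) :=
    (intervalIntegrable_iff_integrableOn_Ioo_of_le zero_le_one).1
      (Complex.betaIntegral_convergent (by simpa) (by simpa))
  refine hconv.re.congr ((ae_restrict_mem measurableSet_Ioo).mono fun t ht ↦ ?_)
  simp only [ofReal_rpow_mul_one_sub_rpow ht, RCLike.re_to_complex, Complex.ofReal_re]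

theorem integral_rpow_mul_one_sub_rpow (ha : 0 < a) (hb : 0 < b) :
    ∫ t in Set.Ioo (0 : ℝ) 1, t ^ (a - 1) * (1 - t) ^ (b - 1) = beta a b := by
  rw [beta_eq_betaIntegralReal a b ha hb, Complex.betaIntegral,
    intervalIntegral.integral_of_le zero_le_one, integral_Ioc_eq_integral_Ioo,
    setIntegral_congr_fun measurableSet_Ioo fun t ht ↦ ofReal_rpow_mul_one_sub_rpow ht,
    integral_complex_ofReal, Complex.ofReal_re]

-- The substitution `t = s / (1 + s)` maps `(0, ∞)` onto `(0, 1)` and turns Euler's beta integral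
-- into its form on the half-line.
theorem rpow_mul_one_add_rpow_neg_eq_smul {s : ℝ} (hs : 0 < s) :
    s ^ (a - 1) * (1 + s) ^ (-(a + b)) =
      (1 / (1 + s) ^ 2) • ((s / (1 + s)) ^ (a - 1) * (1 - s / (1 + s)) ^ (b - 1)) := by
  have hs1 : 0 < 1 + s := by positivity
  have hsub : 1 - s / (1 + s) = (1 + s)⁻¹ := by field_simp; ring
  have hexp : -(a + b) = -2 + -(a - 1) + -(b - 1) := by ring
  rw [hsub, hexp, rpow_add hs1, rpow_add hs1, div_rpow hs.le hs1.le, inv_rpow hs1.le,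
    rpow_neg hs1.le, rpow_neg hs1.le, rpow_neg hs1.le, rpow_two, smul_eq_mul]
  ring

theorem integrableOn_rpow_mul_one_add_rpow_neg (ha : 0 < a) (hb : 0 < b) :
    IntegrableOn (fun s : ℝ ↦ s ^ (a - 1) * (1 + s) ^ (-(a + b))) (Set.Ioi 0) := by
  have hsubst := integrableOn_image_iff_integrableOn_deriv_smul_of_monotoneOn measurableSet_Ioi
    (fun s (hs : 0 < s) ↦ (hasDerivAt_div_one_add (by positivity)).hasDerivWithinAt)
    (monotoneOn_div_one_add.mono (Set.Ioi_subset_Ioi (by norm_num)))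
    (fun t : ℝ ↦ t ^ (a - 1) * (1 - t) ^ (b - 1))
  rw [image_div_one_add_Ioi_zero] at hsubst
  exact (hsubst.1 (integrableOn_rpow_mul_one_sub_rpow ha hb)).congr_fun
    (fun s hs ↦ (rpow_mul_one_add_rpow_neg_eq_smul hs).symm) measurableSet_Ioi

theorem integral_rpow_mul_one_add_rpow_neg (ha : 0 < a) (hb : 0 < b) :
    ∫ s in Set.Ioi (0 : ℝ), s ^ (a - 1) * (1 + s) ^ (-(a + b)) = beta a b := by
  have hsubst := integral_image_eq_integral_deriv_smul_of_monotoneOn measurableSet_Ioi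
    (fun s (hs : 0 < s) ↦ (hasDerivAt_div_one_add (by positivity)).hasDerivWithinAt)
    (monotoneOn_div_one_add.mono (Set.Ioi_subset_Ioi (by norm_num)))
    (fun t : ℝ ↦ t ^ (a - 1) * (1 - t) ^ (b - 1))
  rw [image_div_one_add_Ioi_zero, integral_rpow_mul_one_sub_rpow ha hb] at hsubst
  rw [hsubst]
  exact setIntegral_congr_fun measurableSet_Ioi fun s hs ↦ rpow_mul_one_add_rpow_neg_eq_smul hs

theorem beta_add_one_left (ha : a ≠ 0) (hb : b ≠ 0) :
    beta (a + 1) b = a / b * beta a (b + 1) := by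
  rw [beta, beta, Gamma_add_one ha, Gamma_add_one hb, add_right_comm, ← add_assoc]
  field_simp

theorem integral_rpow_mul_one_add_rpow_neg_mul_sub (ha : 0 < a) (hb : 0 < b) (c : ℝ) :
    ∫ s in Set.Ioi (0 : ℝ), s ^ (a - 1) * (1 + s) ^ (-(a + b + 1)) * (s - c) =
      beta a (b + 1) * (a / b - c) := by
  have hb1 : 0 < b + 1 := by positivity
  have ha1 : 0 < a + 1 := by positivity
  have hsplit : Set.EqOn (fun s : ℝ ↦ s ^ (a - 1) * (1 + s) ^ (-(a + b + 1)) * (s - c))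
      (fun s ↦ s ^ (a + 1 - 1) * (1 + s) ^ (-(a + 1 + b)) -
        c * (s ^ (a - 1) * (1 + s) ^ (-(a + (b + 1))))) (Set.Ioi 0) := by
    intro s (hs : 0 < s)
    have hpow : s ^ (a + 1 - 1) = s ^ (a - 1) * s := by
      rw [← rpow_add_one hs.ne', sub_add_cancel, add_sub_cancel_right]
    simp only [hpow, add_right_comm a 1 b, ← add_assoc]
    ring
  rw [setIntegral_congr_fun measurableSet_Ioi hsplit,
    integral_sub (integrableOn_rpow_mul_one_add_rpow_neg ha1 hb)
      ((integrableOn_rpow_mul_one_add_rpow_neg ha hb1).const_mul c),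
    integral_const_mul, integral_rpow_mul_one_add_rpow_neg ha1 hb,
    integral_rpow_mul_one_add_rpow_neg ha hb1, beta_add_one_left ha.ne' hb.ne']
  ring

end BetaPrime

section GeneratingFunction

/-- The Boas–Buck generating function `s ↦ S(s) ξ(y² T(s) + y U(s) + V(s))` of the basis
`Θ_j(y)`, as a function of `s` with the evaluation point `y` as a parameter. -/
noncomputable def boasBuckGen (ξ S T U V : ℝ → ℝ) (y s : ℝ) : ℝ :=
  S s * ξ (y ^ 2 * T s + y * U s + V s)

variable {ξ S T U V : ℝ → ℝ}

theorem deriv_boasBuckGen {y s : ℝ} (hS : DifferentiableAt ℝ S s) (hT : DifferentiableAt ℝ T s)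
    (hU : DifferentiableAt ℝ U s) (hV : DifferentiableAt ℝ V s)
    (hξ : DifferentiableAt ℝ ξ (y ^ 2 * T s + y * U s + V s)) :
    deriv (boasBuckGen ξ S T U V y) s =
      deriv S s * ξ (y ^ 2 * T s + y * U s + V s) +
        S s * (deriv ξ (y ^ 2 * T s + y * U s + V s) *
          (y ^ 2 * deriv T s + y * deriv U s + deriv V s)) := by
  have harg : HasDerivAt (fun s ↦ y ^ 2 * T s + y * U s + V s)
      (y ^ 2 * deriv T s + y * deriv U s + deriv V s) s :=
    ((hT.hasDerivAt.const_mul _).add (hU.hasDerivAt.const_mul _)).add hV.hasDerivAt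
  exact (hS.hasDerivAt.mul (hξ.hasDerivAt.comp s harg)).deriv

theorem pnx_eq (n : ℕ) (x : ℝ) :
    pnx T U V n x = (n * x) ^ 2 * T 1 + n * x * U 1 + V 1 := by
  rw [pnx, mul_pow]

end GeneratingFunction

section Operator

theorem betaB_eq_beta (j n : ℕ) : betaB j n = ProbabilityTheory.beta j (n + 1) := by
  rw [betaB, ProbabilityTheory.beta, add_assoc]

theorem betaB_succ_ne_zero (j n : ℕ) : betaB (j + 1) n ≠ 0 := by
  rw [betaB_eq_beta]
  exact (ProbabilityTheory.beta_pos (by positivity) (by positivity)).ne'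

theorem integral_pow_mul_one_add_rpow_neg_mul_sub (j : ℕ) {n : ℕ} (hn : n ≠ 0) (c : ℝ) :
    ∫ s in Set.Ioi (0 : ℝ), s ^ j * (1 + s) ^ (-((n : ℝ) + j + 2)) * (s - c) =
      betaB (j + 1) n * ((j + 1) / n - c) := by
  have hmean := integral_rpow_mul_one_add_rpow_neg_mul_sub (a := j + 1) (b := n)
    (by positivity) (by positivity) c
  have hexp : (j : ℝ) + 1 + n + 1 = n + j + 2 := by ring
  rw [betaB_eq_beta, Nat.cast_succ, ← hmean]
  simp only [add_sub_cancel_right, rpow_natCast, hexp]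

variable {ξ S T U V : ℝ → ℝ} {Θ : ℕ → ℝ → ℝ} {n : ℕ} {ρ x : ℝ} {G : ℝ → ℝ}

theorem BDop_sub_const (hρ : 1 < ρ) (hn : n ≠ 0)
    (hG : ∀ s ∈ Set.Ioo (-ρ) ρ, HasSum (fun j ↦ Θ j (n * x) * s ^ j) (G s)) (c : ℝ) :
    BDop ξ S T U V Θ n (fun t ↦ t - c) x =
      (S 1 * ξ (pnx T U V n x))⁻¹ * (deriv G 1 / n - c * G 1) := by
  rw [← Real.ball_zero_eq_Ioo] at hG
  have h1 : (1 : ℝ) ∈ Metric.ball 0 ρ := by simpa using hρ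
  have hvalue : HasSum (fun j ↦ Θ j (n * x)) (G 1) := by simpa using hG 1 h1
  have hderiv : HasSum (fun j : ℕ ↦ j * Θ j (n * x)) (deriv G 1) := by
    simpa using hasSum_natCast_mul_pow_deriv hG h1
  have hsum : HasSum (fun j : ℕ ↦ Θ j (n * x) * (j / n - c)) (deriv G 1 / n - c * G 1) :=
    ((hderiv.div_const (n : ℝ)).sub (hvalue.mul_left c)).congr_fun fun j ↦ by ring
  have hterm (j : ℕ) : Θ (j + 1) (n * x) / betaB (j + 1) n *
      ∫ s in Set.Ioi (0 : ℝ), s ^ j * (1 + s) ^ (-((n : ℝ) + j + 2)) * (s - c) =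
        Θ (j + 1) (n * x) * ((j + 1 : ℕ) / n - c) := by
    rw [integral_pow_mul_one_add_rpow_neg_mul_sub j hn, ← mul_assoc,
      div_mul_cancel₀ _ (betaB_succ_ne_zero j n), Nat.cast_succ]
  rw [BDop, tsum_congr hterm, ← hsum.tsum_eq, hsum.summable.tsum_eq_zero_add]
  simp

end Operator

theorem stmt7_general
    {ρ : ℝ} (hρ : 1 < ρ)
    {ξ S T U V : ℝ → ℝ} {Θ : ℕ → ℝ → ℝ} {n : ℕ} (hn : n ≠ 0) {x : ℝ}
    (hS : DifferentiableAt ℝ S 1) (hT : DifferentiableAt ℝ T 1)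
    (hU : DifferentiableAt ℝ U 1) (hV : DifferentiableAt ℝ V 1)
    (hξ : DifferentiableAt ℝ ξ (pnx T U V n x))
    (hS1 : S 1 ≠ 0) (hξp : ξ (pnx T U V n x) ≠ 0)
    (hgen : ∀ s ∈ Set.Ioo (-ρ) ρ,
      HasSum (fun j ↦ Θ j (n * x) * s ^ j) (boasBuckGen ξ S T U V (n * x) s)) :
    BDop ξ S T U V Θ n (fun t ↦ t - x) x =
      (deriv ξ (pnx T U V n x) / ξ (pnx T U V n x) * (n * x * deriv T 1 + deriv U 1) - 1) * x +
        (1 / (n : ℝ)) * (deriv S 1 / S 1 +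
          deriv V 1 * (deriv ξ (pnx T U V n x) / ξ (pnx T U V n x))) := by
  rw [pnx_eq] at hξ
  rw [BDop_sub_const hρ hn hgen, deriv_boasBuckGen hS hT hU hV hξ, boasBuckGen, ← pnx_eq]
  field_simp
  ring

theorem stmt7
    (ρ : ℝ) (hρ : 1 < ρ)
    (ξ S T U V : ℝ → ℝ) (Θ : ℕ → ℝ → ℝ)
    (p q r u v : ℕ → ℝ)
    (hξser : ∀ t : ℝ, HasSum (fun j : ℕ => p j * t ^ j) (ξ t))
    (hξnn : ∀ t : ℝ, 0 ≤ ξ t)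
    (hSser : ∀ s ∈ Set.Ioo (-ρ) ρ, HasSum (fun j : ℕ => q j * s ^ j) (S s))
    (hTser : ∀ s ∈ Set.Ioo (-ρ) ρ, HasSum (fun j : ℕ => r j * s ^ (j + 1)) (T s))
    (hUser : ∀ s ∈ Set.Ioo (-ρ) ρ, HasSum (fun j : ℕ => u j * s ^ (j + 2)) (U s))
    (hVser : ∀ s ∈ Set.Ioo (-ρ) ρ, HasSum (fun j : ℕ => v j * s ^ (j + 3)) (V s))
    (hS1 : 0 < S 1)
    (hT'1 : deriv T 1 = 0) (hT''1 : deriv (deriv T) 1 = 0) (hU'1 : deriv U 1 = 1)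
    (hΘnn : ∀ (j : ℕ) (y : ℝ), 0 ≤ y → 0 ≤ Θ j y)
    (hgen : ∀ y : ℝ, 0 ≤ y → ∀ s ∈ Set.Ioo (-ρ) ρ,
      HasSum (fun j : ℕ => Θ j y * s ^ j) (S s * ξ (y ^ 2 * T s + y * U s + V s)))
    (hξp : ∀ (m : ℕ), 1 ≤ m → ∀ y : ℝ, 0 ≤ y → 0 < ξ (pnx T U V m y))
    (n : ℕ) (hn : 1 ≤ n) (x : ℝ) (hx : 0 ≤ x) :
    BDop ξ S T U V Θ n (fun t => t - x) x =
      (deriv ξ (pnx T U V n x) / ξ (pnx T U V n x) - 1) * x +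
        (1 / (n : ℝ)) * (deriv S 1 / S 1 +
          deriv V 1 * (deriv ξ (pnx T U V n x) / ξ (pnx T U V n x))) := by
  simp only [← Real.ball_zero_eq_Ioo] at hSser hTser hUser hVser
  have h1 : (1 : ℝ) ∈ Metric.ball 0 ρ := by simpa using hρ
  have hξd : DifferentiableAt ℝ ξ (pnx T U V n x) :=
    differentiableAt_of_hasSum_pow_add 0 (fun t _ ↦ hξser t)
      (mem_ball_zero_iff.2 (lt_add_one ‖pnx T U V n x‖))
  rw [stmt7_general hρ (Nat.one_le_iff_ne_zero.1 hn)
    (differentiableAt_of_hasSum_pow_add 0 hSser h1) (differentiableAt_of_hasSum_pow_add 1 hTser h1)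
    (differentiableAt_of_hasSum_pow_add 2 hUser h1) (differentiableAt_of_hasSum_pow_add 3 hVser h1)
    hξd hS1.ne' (hξp n hn x hx).ne' (hgen _ (by positivity)), hT'1, hU'1, mul_zero, zero_add,
    mul_one]
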